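/- Let k ≥ 3 and let C' ⊆ {-1,1}^{2^k - 1} be a family of vectors such that the Hamming distance between any two distinct members of C' is even and not equal to 2^{k-1}. Then |C'| ≤ Σ_{i=0}^{2^{k-2} - 1} C(2^k - 1, i). -/

import Mathlib

/-!
The polynomial method modulo a prime `p`. Suppose that `c` divides every distance between two
distinct members of `C` and that `c * p ^ a` divides none of them. To each `y ∈ C` attach the
function `x ↦ choose (d(x, y) / c - 1) (p ^ a - 1)` on the cube, a polynomial of degree at most
`p ^ a - 1` in the coordinates of `x`. On `C` these functions form an integer matrix. Off the
diagonal its entries are divisible by `p`, because `p ^ a` does not divide `e = d(x, y) / c` while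
`e * choose (e - 1) (p ^ a - 1) = p ^ a * choose e (p ^ a)`; on the diagonal they are
`choose (-1) (p ^ a - 1) = ±1`. So the determinant is nonzero modulo `p`, the functions are linearly
independent, and there are at most as many of them as squarefree monomials of degree less than
`p ^ a`. For `p = c = 2` and `a = k - 2` the hypothesis only excludes the distance `2 ^ (k - 1)`,
the single positive multiple of `2 ^ (k - 1)` below `2 ^ k`.
-/

open Finset

section CubePolynomials

variable (R : Type*) [CommRing R] {ι : Type*}

/-- The squarefree monomial `∏ i ∈ S, x i` as a function on the cube, with `true` read as `1` and
`false` as `0`; the sign vectors `{-1, 1}` differ from this by an affine change of coordinates,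
which does not affect degrees. -/
def cubeMonomial (S : Finset ι) (x : ι → Bool) : R :=
  ∏ i ∈ S, if x i then 1 else 0

variable (ι) in
/-- The functions on the cube given by polynomials of degree at most `r` in the coordinates. Since
`x i ^ 2 = x i` on the cube, squarefree monomials suffice to span them. -/
def cubePolynomials (r : ℕ) : Submodule R ((ι → Bool) → R) :=
  Submodule.span R (cubeMonomial R '' {S : Finset ι | #S ≤ r})

variable {R}

lemma cubeMonomial_mul [DecidableEq ι] (S T : Finset ι) :
    cubeMonomial R S * cubeMonomial R T = cubeMonomial R (S ∪ T) := by
  ext x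
  simp only [cubeMonomial, Pi.mul_apply, prod_boole, ite_zero_mul_ite_zero, mul_one, mem_union,
    or_imp, forall_and]

lemma cubeMonomial_mem_cubePolynomials {S : Finset ι} {r : ℕ} (hS : #S ≤ r) :
    cubeMonomial R S ∈ cubePolynomials R ι r :=
  Submodule.subset_span ⟨S, hS, rfl⟩

lemma cubePolynomials_mono {r s : ℕ} (h : r ≤ s) : cubePolynomials R ι r ≤ cubePolynomials R ι s :=
  Submodule.span_mono (Set.image_mono fun _ hS ↦ hS.trans h)

lemma one_mem_cubePolynomials (r : ℕ) : (1 : (ι → Bool) → R) ∈ cubePolynomials R ι r := by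
  have h_empty : cubeMonomial R (∅ : Finset ι) = 1 := funext fun _ ↦ prod_empty
  exact h_empty ▸ cubeMonomial_mem_cubePolynomials (Nat.zero_le r)

lemma mul_mem_cubePolynomials {r s : ℕ} {f g : (ι → Bool) → R} (hf : f ∈ cubePolynomials R ι r)
    (hg : g ∈ cubePolynomials R ι s) : f * g ∈ cubePolynomials R ι (r + s) := by
  classical
  have hfg := Submodule.mul_mem_mul hf hg
  rw [cubePolynomials, cubePolynomials, Submodule.span_mul_span] at hfg
  refine Submodule.span_le.2 ?_ hfg
  rintro _ ⟨_, ⟨S, hS, rfl⟩, _, ⟨T, hT, rfl⟩, rfl⟩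
  change cubeMonomial R S * cubeMonomial R T ∈ _
  rw [cubeMonomial_mul]
  exact cubeMonomial_mem_cubePolynomials ((card_union_le S T).trans (add_le_add hS hT))

lemma pow_mem_cubePolynomials {r : ℕ} {f : (ι → Bool) → R} (hf : f ∈ cubePolynomials R ι r)
    (n : ℕ) : f ^ n ∈ cubePolynomials R ι (n * r) := by
  induction n with
  | zero => simpa only [pow_zero] using one_mem_cubePolynomials _
  | succ n ih => simpa only [pow_succ, Nat.succ_mul] using mul_mem_cubePolynomials ih hf

lemma aeval_mem_cubePolynomials {r : ℕ} {f : (ι → Bool) → R} (hf : f ∈ cubePolynomials R ι r)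
    (P : Polynomial R) : Polynomial.aeval f P ∈ cubePolynomials R ι (P.natDegree * r) := by
  rw [Polynomial.aeval_eq_sum_range]
  refine Submodule.sum_mem _ fun n hn ↦ Submodule.smul_mem _ _ ?_
  exact cubePolynomials_mono (Nat.mul_le_mul_right r (mem_range_succ_iff.1 hn))
    (pow_mem_cubePolynomials hf n)

lemma ite_ne_mem_cubePolynomials (i : ι) (b : Bool) :
    (fun x ↦ if x i ≠ b then 1 else 0) ∈ cubePolynomials R ι 1 := by
  have h_coord : (fun x ↦ if x i then 1 else 0) ∈ cubePolynomials R ι 1 := by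
    have h_mono : cubeMonomial R {i} = fun x ↦ if x i then 1 else 0 :=
      funext fun _ ↦ prod_singleton _ i
    exact h_mono ▸ cubeMonomial_mem_cubePolynomials (card_singleton i).le
  cases b with
  | false => simpa only [ne_eq, Bool.not_eq_false] using h_coord
  | true =>
    convert! sub_mem (one_mem_cubePolynomials 1) h_coord using 1
    ext x
    cases hx : x i <;> simp [hx]

variable [Fintype ι]

lemma hammingDist_mem_cubePolynomials (y : ι → Bool) :
    (fun x ↦ (hammingDist x y : R)) ∈ cubePolynomials R ι 1 := by
  convert! Submodule.sum_mem _ fun i (_ : i ∈ univ) ↦ ite_ne_mem_cubePolynomials i (y i) using 1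
  ext x
  simp only [hammingDist, Finset.sum_apply, sum_boole]

lemma finrank_cubePolynomials_le [Nontrivial R] (r : ℕ) :
    Module.finrank R (cubePolynomials R ι r) ≤
      ∑ i ∈ range (r + 1), (Fintype.card ι).choose i := by
  classical
  let supports : Finset (Finset ι) := (range (r + 1)).biUnion fun i ↦ powersetCard i univ
  have h_supports : {S : Finset ι | #S ≤ r} = supports := by
    ext S
    simp [supports]
  rw [cubePolynomials, h_supports, ← coe_image]
  calc Module.finrank R (Submodule.span R (supports.image (cubeMonomial R) : Set ((ι → Bool) → R)))
    _ ≤ #(supports.image (cubeMonomial R)) := finrank_span_finset_le_card _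
    _ ≤ #supports := card_image_le
    _ ≤ ∑ i ∈ range (r + 1), #(powersetCard i (univ : Finset ι)) := card_biUnion_le
    _ = ∑ i ∈ range (r + 1), (Fintype.card ι).choose i := by
      simp only [card_powersetCard, card_univ]

end CubePolynomials

lemma ringChoose_mem_cubePolynomials {K ι : Type*} [Field K] [CharZero K] {s : ℕ}
    {f : (ι → Bool) → K} (hf : f ∈ cubePolynomials K ι s) (r : ℕ) :
    (fun x ↦ Ring.choose (f x) r) ∈ cubePolynomials K ι (r * s) := by
  have h_aeval := aeval_mem_cubePolynomials hf (descPochhammer K r)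
  rw [descPochhammer_natDegree] at h_aeval
  convert! Submodule.smul_mem _ (r.factorial : K)⁻¹ h_aeval using 1
  ext x
  rw [Ring.choose_eq_smul, Pi.smul_apply, Polynomial.aeval_pi_apply₂,
    ← descPochhammer_map (algebraMap ℤ K), Polynomial.aeval_map_algebraMap,
    Polynomial.aeval_eq_smeval]

lemma ringChoose_hammingDist_mem_cubePolynomials {K ι : Type*} [Field K] [CharZero K] [Fintype ι]
    (c : K) (y : ι → Bool) (r : ℕ) :
    (fun x ↦ Ring.choose (hammingDist x y / c - 1) r) ∈ cubePolynomials K ι r := by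
  have h_affine : (fun x ↦ hammingDist x y / c - 1) ∈ cubePolynomials K ι 1 := by
    simpa only [div_eq_inv_mul] using! sub_mem
      (Submodule.smul_mem _ c⁻¹ (hammingDist_mem_cubePolynomials y)) (one_mem_cubePolynomials 1)
  simpa only [mul_one] using ringChoose_mem_cubePolynomials h_affine r

lemma card_le_finrank_of_det_eval_ne_zero {K X α : Type*} [Field K] [Fintype α] [DecidableEq α]
    (W : Submodule K (X → K)) [Module.Finite K W] {f : α → X → K} (hf : ∀ a, f a ∈ W)
    (point : α → X) (hdet : (Matrix.of fun a b ↦ f a (point b)).det ≠ 0) :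
    Fintype.card α ≤ Module.finrank K W := by
  let evalPoints : W →ₗ[K] (α → K) := LinearMap.funLeft K K point ∘ₗ W.subtype
  have h_indep : LinearIndependent K fun a ↦ (⟨f a, hf a⟩ : W) :=
    .of_comp evalPoints (Matrix.linearIndependent_rows_of_det_ne_zero hdet)
  exact h_indep.fintype_card_le_finrank

lemma det_ne_zero_of_diagonal_mod_prime {p : ℕ} (hp : p.Prime) {α : Type*} [Fintype α]
    [DecidableEq α] {M : Matrix α α ℤ} (h_diag : ∀ a, ¬ (p : ℤ) ∣ M a a)
    (h_off : ∀ a b, a ≠ b → (p : ℤ) ∣ M a b) : M.det ≠ 0 := by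
  have : Fact p.Prime := ⟨hp⟩
  have h_mod : M.map (Int.castRingHom (ZMod p)) = Matrix.diagonal fun a ↦ (M a a : ZMod p) := by
    ext a b
    obtain rfl | hab := eq_or_ne a b
    · simp
    · simpa [hab] using (ZMod.intCast_zmod_eq_zero_iff_dvd _ p).2 (h_off a b hab)
  intro h_det
  have h_prod : ∏ a, (M a a : ZMod p) = 0 := by
    rw [← Matrix.det_diagonal, ← h_mod, ← RingHom.mapMatrix_apply, ← RingHom.map_det, h_det,
      map_zero]
  obtain ⟨a, -, ha⟩ := prod_eq_zero_iff.1 h_prod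
  exact h_diag a ((ZMod.intCast_zmod_eq_zero_iff_dvd _ p).1 ha)

lemma card_le_finrank_of_eval_mod_prime {K X α : Type*} [Field K] [CharZero K] [Fintype α]
    (W : Submodule K (X → K)) [Module.Finite K W] {f : α → X → K} (hf : ∀ a, f a ∈ W)
    (point : α → X) {p : ℕ} (hp : p.Prime) {M : α → α → ℤ} (hM : ∀ a b, f a (point b) = M a b)
    (h_diag : ∀ a, ¬ (p : ℤ) ∣ M a a) (h_off : ∀ a b, a ≠ b → (p : ℤ) ∣ M a b) :
    Fintype.card α ≤ Module.finrank K W := by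
  classical
  have h_eval : (Matrix.of fun a b ↦ f a (point b)) =
      (Int.castRingHom K).mapMatrix (Matrix.of M) := Matrix.ext hM
  refine card_le_finrank_of_det_eval_ne_zero W hf point ?_
  rw [h_eval, ← RingHom.map_det, eq_intCast, Int.cast_ne_zero]
  exact det_ne_zero_of_diagonal_mod_prime hp h_diag h_off

lemma dvd_ringChoose_sub_one {p : ℕ} (hp : p.Prime) {a : ℕ} {e : ℤ} (he : ¬ (p : ℤ) ^ a ∣ e) :
    (p : ℤ) ∣ Ring.choose (e - 1) (p ^ a - 1) := by
  have h_absorb : (p : ℤ) ^ a * Ring.choose e (p ^ a) = e * Ring.choose (e - 1) (p ^ a - 1) := by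
    simpa using Ring.choose_smul_choose e (Nat.one_le_pow a p hp.pos)
  by_contra h_dvd
  have h_coprime := ((Nat.prime_iff_prime_int.1 hp).coprime_iff_not_dvd.2 h_dvd).pow_left (m := a)
  exact he (h_coprime.dvd_of_dvd_mul_right (Dvd.intro _ h_absorb))

lemma isUnit_ringChoose_neg_one (r : ℕ) : IsUnit (Ring.choose (-1 : ℤ) r) := by
  have h_one : Ring.choose (1 + (r : ℤ) - 1) r = 1 := by
    rw [add_sub_cancel_left, Ring.choose_natCast, Nat.choose_self, Nat.cast_one]
  rw [Ring.choose_neg, h_one, Units.smul_def, smul_eq_mul, mul_one]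
  exact Units.isUnit _

lemma ringChoose_div_sub_one_eq_intCast {K : Type*} [Field K] [CharZero K] {c d : ℕ} (h : c ∣ d)
    (r : ℕ) : Ring.choose ((d : K) / c - 1) r = (Ring.choose (((d / c : ℕ) : ℤ) - 1) r : ℤ) := by
  rw [← eq_intCast (Int.castRingHom K), Ring.map_choose, map_sub, map_natCast, map_one,
    Nat.cast_div_charZero h]

theorem card_le_of_even_distances_general {ι : Type*} [Fintype ι] {p : ℕ} (hp : p.Prime)
    (a c : ℕ) (C : Finset (ι → Bool))
    (hC : ∀ x ∈ C, ∀ y ∈ C, x ≠ y → c ∣ hammingDist x y ∧ ¬ c * p ^ a ∣ hammingDist x y) :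
    #C ≤ ∑ i ∈ range (p ^ a), (Fintype.card ι).choose i := by
  set r := p ^ a - 1
  have h_dvd (x y : C) : c ∣ hammingDist x.1 y.1 := by
    obtain hxy | hxy := eq_or_ne x.1 y.1
    · simp [hxy]
    · exact (hC x x.2 y y.2 hxy).1
  have h_diag (y : C) :
      ¬ (p : ℤ) ∣ Ring.choose (((hammingDist y.1 y.1 / c : ℕ) : ℤ) - 1) r := by
    rw [hammingDist_self, Nat.zero_div, Nat.cast_zero, zero_sub]
    exact fun h ↦ (Nat.prime_iff_prime_int.1 hp).not_isUnit
      (isUnit_of_dvd_unit h (isUnit_ringChoose_neg_one r))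
  have h_off (y x : C) (hyx : y ≠ x) :
      (p : ℤ) ∣ Ring.choose (((hammingDist x.1 y.1 / c : ℕ) : ℤ) - 1) r := by
    refine dvd_ringChoose_sub_one hp fun h_quot ↦
      (hC x x.2 y y.2 (Subtype.coe_ne_coe.2 hyx.symm)).2 ?_
    rw [← Nat.mul_div_cancel' (h_dvd x y)]
    exact Nat.mul_dvd_mul_left c (mod_cast h_quot)
  have h_card := card_le_finrank_of_eval_mod_prime (cubePolynomials ℚ ι r)
    (fun y : C ↦ ringChoose_hammingDist_mem_cubePolynomials (c : ℚ) y.1 r) Subtype.val hp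
    (fun y x ↦ ringChoose_div_sub_one_eq_intCast (h_dvd x y) r) h_diag h_off
  have hr : r + 1 = p ^ a := Nat.sub_add_cancel (Nat.one_le_pow a p hp.pos)
  simpa only [Fintype.card_coe, hr] using h_card.trans (finrank_cubePolynomials_le r)

lemma not_two_pow_dvd_hammingDist {k : ℕ} {x y : Fin (2 ^ k - 1) → Bool} (hxy : x ≠ y)
    (h_dist : hammingDist x y ≠ 2 ^ (k - 1)) : ¬ 2 ^ (k - 1) ∣ hammingDist x y := by
  intro h_dvd
  have h_le : hammingDist x y ≤ 2 ^ k - 1 := by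
    simpa using hammingDist_le_card_fintype (x := x) (y := y)
  refine h_dist (Nat.eq_of_dvd_of_lt_two_mul (hammingDist_pos.2 hxy).ne' h_dvd ?_)
  calc hammingDist x y < 2 ^ k := (Nat.le_sub_one_iff_lt (Nat.two_pow_pos k)).1 h_le
    _ ≤ 2 ^ (k - 1 + 1) := Nat.pow_le_pow_right two_pos le_tsub_add
    _ = 2 * 2 ^ (k - 1) := pow_succ' 2 (k - 1)

theorem card_le_of_even_distances (k : ℕ) (hk : 3 ≤ k)
    (C' : Finset (Fin (2 ^ k - 1) → Bool))
    (hC' : ∀ x ∈ C', ∀ y ∈ C', x ≠ y →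
      Even (hammingDist x y) ∧ hammingDist x y ≠ 2 ^ (k - 1)) :
    C'.card ≤ ∑ i ∈ Finset.range (2 ^ (k - 2)), Nat.choose (2 ^ k - 1) i := by
  have h_half : 2 * 2 ^ (k - 2) = 2 ^ (k - 1) := by rw [← pow_succ']; congr 1; omega
  simpa only [Fintype.card_fin] using card_le_of_even_distances_general Nat.prime_two (k - 2) 2 C'
    fun x hx y hy hxy ↦ ⟨(hC' x hx y hy hxy).1.two_dvd,
      h_half ▸ not_two_pow_dvd_hammingDist hxy (hC' x hx y hy hxy).2⟩
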